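/- Assume q ≤ 1/2, q + 2λ ≤ 1, λ > 0. Let G^(1), G^(2) be templates whose connected components containing at least one edge are (G^(1)_1,…,G^(1)_{c_1}) and (G^(2)_1,…,G^(2)_{c_2}). For any matching M, any (π^(1),π^(2)) ∈ Π(M), and any S_1 ⊆ {1,…,c_1}, S_2 ⊆ {1,…,c_2}: 0 ≤ E[ ∏_{i∈[c_1]∖S_1} P_{G^(1)_i,π^(1)} · ∏_{j∈[c_2]∖S_2} P_{G^(2)_j,π^(2)} ] · E[ ∏_{i∈S_1} P_{G^(1)_i,π^(1)} ] · E[ ∏_{j∈S_2} P_{G^(2)_j,π^(2)} ] ≤ λ^{|M_PM^{(S_1,S_2)}|/2} · E[ P_{G^(1),π^(1)} · P_{G^(2),π^(2)} ], where M_PM^{(S_1,S_2)} ⊆ M_PM is the set of perfectly matched pairs (v,v′) (excluding possibly the distinguished nodes when isolated) such that v belongs to some G^(1)_i with i∈S_1 or v′ belongs to some G^(2)_j with j∈S_2. -/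

import Mathlib

/-!
Given the labels `z`, the edges are independent, so the conditional moment of a monomial `Y^m` is a
product over the pairs `p = (i, j)` of affine functions of `1{z_i = z_j}` with nonnegative
coefficients. Such a product is a nonnegative combination of indicators of the events that `z` is
constant along a given set of pairs, and these events are subgroups of `(ℤ/K)^n`. Since the index of
an intersection of subgroups is at most the product of the indices, nonnegative combinations of
indicators of subgroups are positively correlated under the uniform measure.

Hence the product of the three expectations is at most the average over `z` of the product of the
three conditional moments, which can be compared pair by pair with the conditional moment of
`P_{G¹,π¹} P_{G²,π²}`. The two differ only at the pairs that are edges of both labeled graphs and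
belong to a selected component: there the square of the first conditional moment of `Y_p` replaces
the second one, and since `q + 2λ ≤ 1` this gains a factor `λ`. Finally every perfectly matched
node of a selected component is an endpoint of one of these pairs, and a pair has two endpoints.
-/

open Classical Finset

noncomputable section

namespace SBM

/-- Index type for the edge slots of a graph on `n` nodes: ordered pairs `i < j`. -/
abbrev Pairs (n : ℕ) := {p : Fin n × Fin n // p.1 < p.2}

/-- A configuration of edges: one Boolean per pair `i < j`. -/
abbrev EdgeConf (n : ℕ) := Pairs n → Bool

/-- Community labels of the `n` nodes, with `K` communities. -/
abbrev Lab (n K : ℕ) := Fin n → Fin K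

/-- The recentered symmetric adjacency entries `Y i j = Y*_{ij} - q` (and `0` on the diagonal). -/
def Ymat (n : ℕ) (q : ℝ) (y : EdgeConf n) (i j : Fin n) : ℝ :=
  if h : i = j then 0
  else (if y ⟨(min i j, max i j), min_lt_max.mpr h⟩ then 1 else 0) - q

/-- Conditional connection probability of a pair given the labels. -/
def pEdge (n K : ℕ) (q lam : ℝ) (z : Lab n K) (p : Pairs n) : ℝ :=
  if z p.1.1 = z p.1.2 then q + lam else q

/-- SBM probability weight of a configuration `(z, y)`: labels are i.i.d. uniform on `Fin K`
and, conditionally on `z`, edges are independent Bernoulli. -/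
def wt (n K : ℕ) (q lam : ℝ) (z : Lab n K) (y : EdgeConf n) : ℝ :=
  ((K : ℝ)⁻¹) ^ n *
    ∏ p : Pairs n, (if y p then pEdge n K q lam z p else 1 - pEdge n K q lam z p)

/-- Expectation under the SBM. -/
def expec (n K : ℕ) (q lam : ℝ) (F : Lab n K → EdgeConf n → ℝ) : ℝ :=
  ∑ z : Lab n K, ∑ y : EdgeConf n, wt n K q lam z y * F z y

/-- Expectation conditionally on `z i = z j`. -/
def expecEq (n K : ℕ) (q lam : ℝ) (i j : Fin n) (F : Lab n K → EdgeConf n → ℝ) : ℝ :=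
  expec n K q lam (fun z y => if z i = z j then F z y else 0) /
    expec n K q lam (fun z _ => if z i = z j then 1 else 0)

/-- Expectation conditionally on `z i ≠ z j`. -/
def expecNe (n K : ℕ) (q lam : ℝ) (i j : Fin n) (F : Lab n K → EdgeConf n → ℝ) : ℝ :=
  expec n K q lam (fun z y => if z i ≠ z j then F z y else 0) /
    expec n K q lam (fun z _ => if z i ≠ z j then 1 else 0)

/-- Variance conditionally on `z i = z j`. -/
def varEq (n K : ℕ) (q lam : ℝ) (i j : Fin n) (F : Lab n K → EdgeConf n → ℝ) : ℝ :=
  expecEq n K q lam i j (fun z y => F z y ^ 2) - expecEq n K q lam i j F ^ 2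

/-- Variance conditionally on `z i ≠ z j`. -/
def varNe (n K : ℕ) (q lam : ℝ) (i j : Fin n) (F : Lab n K → EdgeConf n → ℝ) : ℝ :=
  expecNe n K q lam i j (fun z y => F z y ^ 2) - expecNe n K q lam i j F ^ 2

/-- The (centered) membership indicator `x = 1{z i0 = z i1} - 1/K`. -/
def xind (n K : ℕ) (i0 i1 : Fin n) (z : Lab n K) : ℝ :=
  (if z i0 = z i1 then 1 else 0) - 1 / K

/-- A template: a finite simple graph on `Fin v` (edges stored as ordered pairs `a < b`)
with the two distinguished nodes `0` and `1`. -/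
structure Template where
  v : ℕ
  hv : 2 ≤ v
  E : Finset (Fin v × Fin v)
  hE : ∀ e ∈ E, e.1 < e.2

namespace Template

/-- First distinguished node. -/
def v1 (T : Template) : Fin T.v := ⟨0, by have := T.hv; omega⟩

/-- Second distinguished node. -/
def v2 (T : Template) : Fin T.v := ⟨1, by have := T.hv; omega⟩

/-- The underlying simple graph of a template. -/
def graph (T : Template) : SimpleGraph (Fin T.v) :=
  SimpleGraph.fromRel fun a b => (a, b) ∈ T.E

end Template

/-- Labelings `Π_V`: injections sending the distinguished nodes to the nodes `0` and `1`. -/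
def PiV (n : ℕ) (hn : 2 ≤ n) (T : Template) : Finset (Fin T.v ↪ Fin n) :=
  Finset.univ.filter fun π =>
    π T.v1 = (⟨0, by omega⟩ : Fin n) ∧ π T.v2 = (⟨1, by omega⟩ : Fin n)

/-- The monomial `P_{G,π}(Y) = ∏_{(u,w) ∈ E} Y_{π u, π w}`. -/
def PG (n : ℕ) (q : ℝ) (T : Template) (π : Fin T.v ↪ Fin n) (y : EdgeConf n) : ℝ :=
  ∏ e ∈ T.E, Ymat n q y (π e.1) (π e.2)

/-- A matching between the node sets of two templates: no node appears twice. -/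
def IsMatching (T1 T2 : Template) (M : Finset (Fin T1.v × Fin T2.v)) : Prop :=
  (∀ p ∈ M, ∀ p' ∈ M, (p : Fin T1.v × Fin T2.v).1 = (p' : Fin T1.v × Fin T2.v).1 → p = p') ∧
  (∀ p ∈ M, ∀ p' ∈ M, (p : Fin T1.v × Fin T2.v).2 = (p' : Fin T1.v × Fin T2.v).2 → p = p')

/-- `Π(M)`: pairs of labelings compatible with the matching `M`. -/
def PiM (n : ℕ) (hn : 2 ≤ n) (T1 T2 : Template) (M : Finset (Fin T1.v × Fin T2.v)) :
    Set ((Fin T1.v ↪ Fin n) × (Fin T2.v ↪ Fin n)) :=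
  {pp | pp.1 ∈ PiV n hn T1 ∧ pp.2 ∈ PiV n hn T2 ∧
    ∀ (a : Fin T1.v) (b : Fin T2.v), pp.1 a = pp.2 b ↔ (a, b) ∈ M}

/-- An edge of `T1` is matched if its two endpoints are matched to the endpoints of an
edge of `T2`. -/
def EdgeMatched1 (T1 T2 : Template) (M : Finset (Fin T1.v × Fin T2.v))
    (e : Fin T1.v × Fin T1.v) : Prop :=
  ∃ e' ∈ T2.E, ((e.1, e'.1) ∈ M ∧ (e.2, e'.2) ∈ M) ∨ ((e.1, e'.2) ∈ M ∧ (e.2, e'.1) ∈ M)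

/-- An edge of `T2` is matched if its two endpoints are matched to the endpoints of an
edge of `T1`. -/
def EdgeMatched2 (T1 T2 : Template) (M : Finset (Fin T1.v × Fin T2.v))
    (e' : Fin T2.v × Fin T2.v) : Prop :=
  ∃ e ∈ T1.E, ((e.1, e'.1) ∈ M ∧ (e.2, e'.2) ∈ M) ∨ ((e.1, e'.2) ∈ M ∧ (e.2, e'.1) ∈ M)

/-- `|E_Δ|`: the number of unmatched edges (in either template). -/
def EDeltaCard (T1 T2 : Template) (M : Finset (Fin T1.v × Fin T2.v)) : ℕ :=
  (T1.E.filter fun e => ¬ EdgeMatched1 T1 T2 M e).card +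
    (T2.E.filter fun e => ¬ EdgeMatched2 T1 T2 M e).card

/-- `|U^{(1)}|`: the number of unmatched nodes of the first template. -/
def U1card (T1 T2 : Template) (M : Finset (Fin T1.v × Fin T2.v)) : ℕ :=
  (Finset.univ.filter fun a : Fin T1.v => ∀ p ∈ M, (p : Fin T1.v × Fin T2.v).1 ≠ a).card

/-- `|U^{(2)}|`: the number of unmatched nodes of the second template. -/
def U2card (T1 T2 : Template) (M : Finset (Fin T1.v × Fin T2.v)) : ℕ :=
  (Finset.univ.filter fun b : Fin T2.v => ∀ p ∈ M, (p : Fin T1.v × Fin T2.v).2 ≠ b).card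

/-- A pair of matched nodes is semi-matched if one of them is incident to an unmatched edge. -/
def IsSemiMatched (T1 T2 : Template) (M : Finset (Fin T1.v × Fin T2.v))
    (p : Fin T1.v × Fin T2.v) : Prop :=
  (∃ e ∈ T1.E, (e.1 = p.1 ∨ e.2 = p.1) ∧ ¬ EdgeMatched1 T1 T2 M e) ∨
  (∃ e' ∈ T2.E, (e'.1 = p.2 ∨ e'.2 = p.2) ∧ ¬ EdgeMatched2 T1 T2 M e')

/-- `M_SM`: the semi-matched pairs of `M`. -/
def MSM (T1 T2 : Template) (M : Finset (Fin T1.v × Fin T2.v)) :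
    Finset (Fin T1.v × Fin T2.v) :=
  M.filter (IsSemiMatched T1 T2 M)

/-- `M_PM`: the perfectly matched pairs of `M`. -/
def MPM (T1 T2 : Template) (M : Finset (Fin T1.v × Fin T2.v)) :
    Finset (Fin T1.v × Fin T2.v) :=
  M.filter fun p => ¬ IsSemiMatched T1 T2 M p

/-- A node is isolated if it is incident to no edge. -/
def IsIsolated (T : Template) (w : Fin T.v) : Prop :=
  ∀ e ∈ T.E, e.1 ≠ w ∧ e.2 ≠ w

/-- The pruned matching `M⁻`: remove the pair of first (resp. second) distinguished nodes
whenever that node is isolated in `T1` or in `T2`. -/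
def Mminus (T1 T2 : Template) (M : Finset (Fin T1.v × Fin T2.v)) :
    Finset (Fin T1.v × Fin T2.v) :=
  M.filter fun p =>
    ¬ ((p = (T1.v1, T2.v1) ∧ (IsIsolated T1 T1.v1 ∨ IsIsolated T2 T2.v1)) ∨
       (p = (T1.v2, T2.v2) ∧ (IsIsolated T1 T1.v2 ∨ IsIsolated T2 T2.v2)))

/-- `M ∈ M*`: every connected component of `T1` and of `T2` meets the pruned matching. -/
def InMstar (T1 T2 : Template) (M : Finset (Fin T1.v × Fin T2.v)) : Prop :=
  (∀ w : Fin T1.v, ∃ p ∈ Mminus T1 T2 M, T1.graph.Reachable w p.1) ∧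
  (∀ w : Fin T2.v, ∃ p ∈ Mminus T1 T2 M, T2.graph.Reachable w p.2)


/-- Canonical representative (the minimum) of the connected component of `w`. -/
def compRep (T : Template) (w : Fin T.v) : Fin T.v :=
  (Finset.univ.filter fun u => T.graph.Reachable w u).min'
    ⟨w, by
      simp only [Finset.mem_filter, Finset.mem_univ, true_and]
      exact SimpleGraph.Reachable.refl w⟩

/-- The edges of the connected component of `w`. -/
def compEdges (T : Template) (w : Fin T.v) : Finset (Fin T.v × Fin T.v) :=
  T.E.filter fun e => T.graph.Reachable e.1 w

/-- The monomial attached to the connected component of `w`. -/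
def Pcomp (n : ℕ) (q : ℝ) (T : Template) (π : Fin T.v ↪ Fin n) (w : Fin T.v)
    (y : EdgeConf n) : ℝ :=
  ∏ e ∈ compEdges T w, Ymat n q y (π e.1) (π e.2)

/-- Representatives of the connected components of `T` containing at least one edge. -/
def edgeCompReps (T : Template) : Finset (Fin T.v) :=
  Finset.univ.filter fun w => compRep T w = w ∧ ∃ e ∈ T.E, T.graph.Reachable e.1 w

/-- The centered polynomial `P̄_{G,π} = ∏_l (P_{G_l,π} - E[P_{G_l,π}])`, the product running
over the connected components with at least one edge. -/
def Pbar (n K : ℕ) (q lam : ℝ) (T : Template) (π : Fin T.v ↪ Fin n) (y : EdgeConf n) : ℝ :=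
  ∏ w ∈ edgeCompReps T,
    (Pcomp n q T π w y - expec n K q lam fun _ y' => Pcomp n q T π w y')

/-- `|Aut(G)|`: the number of automorphisms of the template fixing both distinguished nodes. -/
def autCard (T : Template) : ℕ :=
  Nat.card {σ : Equiv.Perm (Fin T.v) //
    σ T.v1 = T.v1 ∧ σ T.v2 = T.v2 ∧ ∀ a b, T.graph.Adj a b ↔ T.graph.Adj (σ a) (σ b)}

/-- The variance proxy `𝕍(G) = ((n-2)!/(n-|V|)!) |Aut(G)| E[P_{G,π}²]
  = |Aut(G)| ∑_{π ∈ Π_V} E[P_{G,π}²]`. -/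
def VG (n K : ℕ) (hn : 2 ≤ n) (q lam : ℝ) (T : Template) : ℝ :=
  autCard T * ∑ π ∈ PiV n hn T, expec n K q lam fun _ y => PG n q T π y ^ 2

/-- The normalized invariant polynomial `Ψ_G = P̄_G / √𝕍(G)`. -/
def Psi (n K : ℕ) (hn : 2 ≤ n) (q lam : ℝ) (T : Template) (y : EdgeConf n) : ℝ :=
  (∑ π ∈ PiV n hn T, Pbar n K q lam T π y) / Real.sqrt (VG n K hn q lam T)

/-- A template suitable for `𝒢_{≤D}`: between `1` and `D` edges, and no isolated node
except possibly the distinguished ones. -/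
def GoodTemplate (D : ℕ) (T : Template) : Prop :=
  1 ≤ T.E.card ∧ T.E.card ≤ D ∧
    ∀ w : Fin T.v, w ≠ T.v1 → w ≠ T.v2 → ¬ IsIsolated T w

/-- Equivalence of templates: a graph isomorphism mapping distinguished nodes to
distinguished nodes. -/
def TEquiv (T1 T2 : Template) : Prop :=
  ∃ σ : Fin T1.v ≃ Fin T2.v, σ T1.v1 = T2.v1 ∧ σ T1.v2 = T2.v2 ∧
    ∀ a b, T1.graph.Adj a b ↔ T2.graph.Adj (σ a) (σ b)

/-- `𝒢` is a valid choice for `𝒢_{≤D}`: a maximal collection of pairwise non-equivalent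
good templates. -/
def IsTemplateBasis (D : ℕ) (𝒢 : Set Template) : Prop :=
  (∀ T ∈ 𝒢, GoodTemplate D T) ∧
  (∀ T1 ∈ 𝒢, ∀ T2 ∈ 𝒢, TEquiv T1 T2 → T1 = T2) ∧
  ∀ T, GoodTemplate D T → ∃ T' ∈ 𝒢, TEquiv T T'

/-- A matching containing the pairs of distinguished nodes. -/
def IsMatching12 (T1 T2 : Template) (M : Finset (Fin T1.v × Fin T2.v)) : Prop :=
  IsMatching T1 T2 M ∧ (T1.v1, T2.v1) ∈ M ∧ (T1.v2, T2.v2) ∈ M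

/-- The edit distance `d(G^{(1)}, G^{(2)}) = min_M |E_Δ|`. -/
def editDist (T1 T2 : Template) : ℕ :=
  sInf {k : ℕ | ∃ M : Finset (Fin T1.v × Fin T2.v),
    IsMatching12 T1 T2 M ∧ k = EDeltaCard T1 T2 M}

open scoped BigOperators NNReal

/-! ### Positive correlation of subgroup indicators -/

section SubgroupCone

variable {G : Type*} [AddGroup G]

/-- The indicator functions of the subgroups of `G`, a multiplicative submonoid of `G → ℝ`. -/
def subgroupIndicators (G : Type*) [AddGroup G] : Submonoid (G → ℝ) where
  carrier := Set.range fun H : AddSubgroup G => (H : Set G).indicator 1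
  one_mem' := ⟨⊤, by simp⟩
  mul_mem' := by
    rintro _ _ ⟨H, rfl⟩ ⟨L, rfl⟩
    exact ⟨H ⊓ L, by simp [AddSubgroup.coe_inf, Set.inter_indicator_one]⟩

/-- The convex cone of nonnegative combinations of indicators of subgroups of `G`. It is closed
under multiplication, so it is encoded as an `ℝ≥0`-subalgebra of `G → ℝ`. -/
def subgroupCone (G : Type*) [AddGroup G] : Subalgebra ℝ≥0 (G → ℝ) :=
  Algebra.adjoin ℝ≥0 (subgroupIndicators G : Set (G → ℝ))

lemma indicator_mem_subgroupCone (H : AddSubgroup G) :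
    (H : Set G).indicator 1 ∈ subgroupCone G :=
  Algebra.subset_adjoin ⟨H, rfl⟩

lemma const_mem_subgroupCone {c : ℝ} (hc : 0 ≤ c) : (fun _ => c) ∈ subgroupCone G :=
  (subgroupCone G).algebraMap_mem ⟨c, hc⟩

lemma mem_subgroupCone_iff_mem_span {f : G → ℝ} :
    f ∈ subgroupCone G ↔ f ∈ Submodule.span ℝ≥0 (subgroupIndicators G : Set (G → ℝ)) := by
  rw [subgroupCone, ← Subalgebra.mem_toSubmodule, Algebra.adjoin_eq_span, Submonoid.closure_eq]

lemma nonneg_of_mem_subgroupCone {f : G → ℝ} (hf : f ∈ subgroupCone G) : 0 ≤ f := by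
  rw [mem_subgroupCone_iff_mem_span] at hf
  induction hf using Submodule.span_induction with
  | mem f hf =>
    obtain ⟨H, rfl⟩ := hf
    exact Set.indicator_nonneg fun _ _ => zero_le_one
  | zero => exact le_rfl
  | add f g _ _ hf hg => exact add_nonneg hf hg
  | smul c f _ hf => exact smul_nonneg c.2 hf

variable [Fintype G]

lemma expect_indicator_addSubgroup (H : AddSubgroup G) :
    𝔼 x, (H : Set G).indicator (1 : G → ℝ) x = (H.index : ℝ)⁻¹ := by
  have hcard : (Nat.card H * H.index : ℝ) = Fintype.card G := by
    rw [← Nat.card_eq_fintype_card]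
    exact_mod_cast H.card_mul_index
  have hH : (Nat.card H : ℝ) ≠ 0 := Nat.cast_ne_zero.2 Nat.card_pos.ne'
  have hsum : ∑ x, (H : Set G).indicator (1 : G → ℝ) x = Nat.card H := by
    simp [Set.indicator_apply, Finset.sum_boole, Nat.card_eq_fintype_card, Fintype.card_subtype]
  rw [Fintype.expect_eq_sum_div_card, hsum, ← hcard, div_mul_cancel_left₀ hH]

lemma expect_indicator_mul_expect_indicator_le (H L : AddSubgroup G) :
    (𝔼 x, (H : Set G).indicator (1 : G → ℝ) x) * 𝔼 x, (L : Set G).indicator (1 : G → ℝ) x ≤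
      𝔼 x, (H : Set G).indicator (1 : G → ℝ) x * (L : Set G).indicator (1 : G → ℝ) x := by
  have hinf (x : G) : (H : Set G).indicator (1 : G → ℝ) x * (L : Set G).indicator 1 x =
      ((H ⊓ L : AddSubgroup G) : Set G).indicator 1 x := by
    simp [AddSubgroup.coe_inf, Set.inter_indicator_one]
  simp_rw [hinf, expect_indicator_addSubgroup, ← mul_inv]
  have hpos : 0 < (H ⊓ L).index := Nat.pos_of_ne_zero AddSubgroup.index_ne_zero_of_finite
  exact inv_anti₀ (mod_cast hpos) (mod_cast AddSubgroup.index_inf_le)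

theorem expect_mul_expect_le_of_mem_subgroupCone {f g : G → ℝ}
    (hf : f ∈ subgroupCone G) (hg : g ∈ subgroupCone G) :
    (𝔼 x, f x) * 𝔼 x, g x ≤ 𝔼 x, f x * g x := by
  rw [mem_subgroupCone_iff_mem_span] at hf hg
  induction hf, hg using Submodule.span_induction₂ with
  | mem_mem f g hf hg =>
    obtain ⟨H, rfl⟩ := hf
    obtain ⟨L, rfl⟩ := hg
    exact expect_indicator_mul_expect_indicator_le H L
  | zero_left g _ => simp
  | zero_right f _ => simp
  | add_left f₁ f₂ g _ _ _ h₁ h₂ =>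
    simpa only [Pi.add_apply, add_mul, Finset.expect_add_distrib] using add_le_add h₁ h₂
  | add_right f g₁ g₂ _ _ _ h₁ h₂ =>
    simpa only [Pi.add_apply, mul_add, Finset.expect_add_distrib] using add_le_add h₁ h₂
  | smul_left c f g _ _ h =>
    simpa only [Pi.smul_apply, NNReal.smul_def, smul_eq_mul, mul_assoc, ← Finset.mul_expect] using
      mul_le_mul_of_nonneg_left h c.coe_nonneg
  | smul_right c f g _ _ h =>
    simpa only [Pi.smul_apply, NNReal.smul_def, smul_eq_mul, mul_left_comm _ (c : ℝ),
      ← Finset.mul_expect] using mul_le_mul_of_nonneg_left h c.coe_nonneg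

end SubgroupCone

/-! ### Moments of Bernoulli variables -/

section BernoulliMoment

variable {q lam θ : ℝ}

/-- The `k`-th moment about `q` of a Bernoulli variable with parameter `θ`. -/
def bernoulliMoment (q θ : ℝ) (k : ℕ) : ℝ := θ * (1 - q) ^ k + (1 - θ) * (-q) ^ k

lemma bernoulliMoment_zero : bernoulliMoment q θ 0 = 1 := by
  simp [bernoulliMoment]

lemma bernoulliMoment_one : bernoulliMoment q θ 1 = θ - q := by
  simp only [bernoulliMoment]; ring

lemma bernoulliMoment_two :
    bernoulliMoment q θ 2 = q * (1 - q) + (θ - q) * (1 - 2 * q) := by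
  simp only [bernoulliMoment]; ring

lemma neg_pow_le_one_sub_pow (hq0 : 0 ≤ q) (hq2 : q ≤ 1 / 2) (k : ℕ) :
    (-q) ^ k ≤ (1 - q) ^ k :=
  calc (-q) ^ k ≤ |(-q) ^ k| := le_abs_self _
    _ = q ^ k := by rw [abs_pow, abs_neg, abs_of_nonneg hq0]
    _ ≤ (1 - q) ^ k := pow_le_pow_left₀ hq0 (by linarith) k

lemma bernoulliMoment_self_nonneg (hq0 : 0 ≤ q) (hq2 : q ≤ 1 / 2) (k : ℕ) :
    0 ≤ bernoulliMoment q q k := by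
  cases k with
  | zero => simp [bernoulliMoment_zero]
  | succ k =>
    have h : bernoulliMoment q q (k + 1) = q * (1 - q) * ((1 - q) ^ k - (-q) ^ k) := by
      simp only [bernoulliMoment]; ring
    rw [h]
    exact mul_nonneg (mul_nonneg hq0 (by linarith))
      (sub_nonneg.2 (neg_pow_le_one_sub_pow hq0 hq2 k))

lemma bernoulliMoment_mono (hq0 : 0 ≤ q) (hq2 : q ≤ 1 / 2) (k : ℕ) :
    Monotone fun θ => bernoulliMoment q θ k := fun θ θ' h => by
  have := mul_le_mul_of_nonneg_left (neg_pow_le_one_sub_pow hq0 hq2 k) (sub_nonneg.2 h)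
  simp only [bernoulliMoment]
  linarith

lemma sq_bernoulliMoment_one_le (hq0 : 0 ≤ q) (hql : q + 2 * lam ≤ 1)
    (hθ : q ≤ θ) (hθ' : θ ≤ q + lam) :
    bernoulliMoment q θ 1 * bernoulliMoment q θ 1 ≤ lam * bernoulliMoment q θ 2 := by
  have hlam : 0 ≤ lam := by linarith
  have hle : θ - q ≤ bernoulliMoment q θ 2 := by
    have : 0 ≤ q * (1 - q - 2 * (θ - q)) := mul_nonneg hq0 (by linarith)
    rw [bernoulliMoment_two]
    linarith
  rw [bernoulliMoment_one]
  exact mul_le_mul (by linarith) hle (by linarith) hlam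

lemma bernoulliMoment_mul_mul_le (hq0 : 0 ≤ q) (hql : q + 2 * lam ≤ 1)
    (hθ : q ≤ θ) (hθ' : θ ≤ q + lam) {r s r' s' : ℕ} (h : r + s ≤ 1) (h' : r' + s' ≤ 1) :
    bernoulliMoment q θ (r + r') * bernoulliMoment q θ s * bernoulliMoment q θ s' ≤
      (if 0 < r + s ∧ 0 < r' + s' ∧ (0 < s ∨ 0 < s') then lam else 1) *
        bernoulliMoment q θ (r + s + (r' + s')) := by
  have hsq := sq_bernoulliMoment_one_le hq0 hql hθ hθ'
  obtain ⟨rfl, rfl⟩ | ⟨rfl, rfl⟩ | ⟨rfl, rfl⟩ :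
      (r = 0 ∧ s = 0) ∨ (r = 1 ∧ s = 0) ∨ (r = 0 ∧ s = 1) := by omega
  all_goals
    obtain ⟨rfl, rfl⟩ | ⟨rfl, rfl⟩ | ⟨rfl, rfl⟩ :
        (r' = 0 ∧ s' = 0) ∨ (r' = 1 ∧ s' = 0) ∨ (r' = 0 ∧ s' = 1) := by omega
    all_goals simp [bernoulliMoment_zero, hsq]

end BernoulliMoment

/-! ### Mixed moments of the edge variables -/

section Moments

variable {n K : ℕ} {q lam : ℝ}

/-- The monomial `∏_p Y_p ^ m_p` in the centered edge variables. -/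
def edgeMonomial (q : ℝ) (m : Pairs n → ℕ) (y : EdgeConf n) : ℝ :=
  ∏ p, ((if y p then 1 else 0) - q) ^ m p

/-- The conditional expectation of `edgeMonomial q m` given the labels. -/
def condMoment (q lam : ℝ) (m : Pairs n → ℕ) (z : Lab n K) : ℝ :=
  ∏ p, bernoulliMoment q (pEdge n K q lam z p) (m p)

lemma edgeMonomial_add (m m' : Pairs n → ℕ) (y : EdgeConf n) :
    edgeMonomial q (m + m') y = edgeMonomial q m y * edgeMonomial q m' y := by
  simp only [edgeMonomial, Pi.add_apply, pow_add, Finset.prod_mul_distrib]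

lemma expec_prod_eq_expect (n K : ℕ) (q lam : ℝ) (g : Pairs n → Bool → ℝ) :
    expec n K q lam (fun _ y => ∏ p, g p (y p)) =
      𝔼 z : Lab n K, ∏ p,
        (pEdge n K q lam z p * g p true + (1 - pEdge n K q lam z p) * g p false) := by
  have hsum (z : Lab n K) :
      ∏ p, (pEdge n K q lam z p * g p true + (1 - pEdge n K q lam z p) * g p false) =
        ∑ y : EdgeConf n, ∏ p,
          (if y p then pEdge n K q lam z p else 1 - pEdge n K q lam z p) * g p (y p) := by
    rw [← Fintype.piFinset_univ,
      ← Finset.prod_univ_sum (fun _ => Finset.univ) fun p b =>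
        (if b then pEdge n K q lam z p else 1 - pEdge n K q lam z p) * g p b]
    simp
  have hcard : (Fintype.card (Lab n K) : ℝ) = (K : ℝ) ^ n := by simp
  simp only [expec, wt, Fintype.expect_eq_sum_div_card, hsum, hcard, Finset.prod_mul_distrib,
    mul_assoc, ← Finset.mul_sum, inv_pow, div_eq_inv_mul]

lemma expec_edgeMonomial (n K : ℕ) (q lam : ℝ) (m : Pairs n → ℕ) :
    expec n K q lam (fun _ y => edgeMonomial q m y) = 𝔼 z : Lab n K, condMoment q lam m z := by
  simpa [edgeMonomial, condMoment, bernoulliMoment] using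
    expec_prod_eq_expect n K q lam fun p b => ((if b then 1 else 0) - q) ^ m p

lemma le_pEdge (hlam : 0 ≤ lam) (z : Lab n K) (p : Pairs n) : q ≤ pEdge n K q lam z p := by
  unfold pEdge; split_ifs <;> linarith

lemma pEdge_le (hlam : 0 ≤ lam) (z : Lab n K) (p : Pairs n) :
    pEdge n K q lam z p ≤ q + lam := by
  unfold pEdge; split_ifs <;> linarith

variable [NeZero K]

lemma bernoulliMoment_pEdge_mem_subgroupCone (hq0 : 0 ≤ q) (hq2 : q ≤ 1 / 2) (hlam : 0 ≤ lam)
    (k : ℕ) (p : Pairs n) :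
    (fun z => bernoulliMoment q (pEdge n K q lam z p) k) ∈ subgroupCone (Lab n K) := by
  let H : AddSubgroup (Lab n K) :=
    (Pi.evalAddMonoidHom (fun _ => Fin K) p.1.1).eqLocus (Pi.evalAddMonoidHom _ p.1.2)
  have hslope : 0 ≤ bernoulliMoment q (q + lam) k - bernoulliMoment q q k :=
    sub_nonneg.2 (bernoulliMoment_mono hq0 hq2 k (by linarith))
  have haffine : (fun z => bernoulliMoment q (pEdge n K q lam z p) k) =
      (fun _ => bernoulliMoment q q k) +
        (fun _ => bernoulliMoment q (q + lam) k - bernoulliMoment q q k) *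
          (H : Set (Lab n K)).indicator 1 := by
    funext z
    have hmem : z ∈ H ↔ z p.1.1 = z p.1.2 := Iff.rfl
    by_cases hz : z p.1.1 = z p.1.2 <;> simp [pEdge, hmem, hz]
  rw [haffine]
  exact add_mem (const_mem_subgroupCone (bernoulliMoment_self_nonneg hq0 hq2 k))
    (mul_mem (const_mem_subgroupCone hslope) (indicator_mem_subgroupCone H))

lemma condMoment_mem_subgroupCone (hq0 : 0 ≤ q) (hq2 : q ≤ 1 / 2) (hlam : 0 ≤ lam)
    (m : Pairs n → ℕ) : condMoment q lam m ∈ subgroupCone (Lab n K) := by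
  have hprod : (condMoment q lam m : Lab n K → ℝ) =
      ∏ p, fun z => bernoulliMoment q (pEdge n K q lam z p) (m p) := by
    funext z
    simp only [condMoment, Finset.prod_apply]
  rw [hprod]
  exact prod_mem fun p _ => bernoulliMoment_pEdge_mem_subgroupCone hq0 hq2 hlam (m p) p

lemma condMoment_nonneg (hq0 : 0 ≤ q) (hq2 : q ≤ 1 / 2) (hlam : 0 ≤ lam)
    (m : Pairs n → ℕ) (z : Lab n K) : 0 ≤ condMoment q lam m z :=
  nonneg_of_mem_subgroupCone (condMoment_mem_subgroupCone hq0 hq2 hlam m) z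

lemma expec_edgeMonomial_nonneg (hq0 : 0 ≤ q) (hq2 : q ≤ 1 / 2) (hlam : 0 ≤ lam)
    (m : Pairs n → ℕ) : 0 ≤ expec n K q lam (fun _ y => edgeMonomial q m y) := by
  rw [expec_edgeMonomial]
  exact Finset.expect_nonneg fun z _ => condMoment_nonneg hq0 hq2 hlam m z

/-- The pairs carrying an edge of both graphs, at least one of which is selected. The graphs enter
through their edge multiplicities `m` and `m'`, the selected parts through `s` and `s'`. -/
def sharedPairs (m s m' s' : Pairs n → ℕ) : Finset (Pairs n) :=
  Finset.univ.filter fun p => 0 < m p ∧ 0 < m' p ∧ (0 < s p ∨ 0 < s' p)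

lemma condMoment_mul_mul_le (hq0 : 0 ≤ q) (hq2 : q ≤ 1 / 2) (hql : q + 2 * lam ≤ 1)
    (hlam : 0 ≤ lam) {r s r' s' : Pairs n → ℕ} (h : r + s ≤ 1) (h' : r' + s' ≤ 1)
    (z : Lab n K) :
    condMoment q lam (r + r') z * condMoment q lam s z * condMoment q lam s' z ≤
      lam ^ (sharedPairs (r + s) s (r' + s') s').card * condMoment q lam (r + s + (r' + s')) z := by
  have hnonneg (k : ℕ) (p : Pairs n) : 0 ≤ bernoulliMoment q (pEdge n K q lam z p) k :=
    nonneg_of_mem_subgroupCone (bernoulliMoment_pEdge_mem_subgroupCone hq0 hq2 hlam k p) z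
  have hpow : lam ^ (sharedPairs (r + s) s (r' + s') s').card = ∏ p : Pairs n,
      if 0 < (r + s) p ∧ 0 < (r' + s') p ∧ (0 < s p ∨ 0 < s' p) then lam else 1 := by
    rw [sharedPairs, Finset.prod_ite, Finset.prod_const, Finset.prod_const_one, mul_one]
  simp only [condMoment, hpow, ← Finset.prod_mul_distrib]
  exact Finset.prod_le_prod
    (fun p _ => mul_nonneg (mul_nonneg (hnonneg _ p) (hnonneg _ p)) (hnonneg _ p))
    fun p _ => bernoulliMoment_mul_mul_le hq0 hql (le_pEdge hlam z p) (pEdge_le hlam z p)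
      (h p) (h' p)

theorem expec_edgeMonomial_mul_mul_le (hq0 : 0 ≤ q) (hq2 : q ≤ 1 / 2) (hql : q + 2 * lam ≤ 1)
    (hlam : 0 ≤ lam) {r s r' s' : Pairs n → ℕ} (h : r + s ≤ 1) (h' : r' + s' ≤ 1) :
    expec n K q lam (fun _ y => edgeMonomial q (r + r') y) *
        expec n K q lam (fun _ y => edgeMonomial q s y) *
        expec n K q lam (fun _ y => edgeMonomial q s' y) ≤
      lam ^ (sharedPairs (r + s) s (r' + s') s').card *
        expec n K q lam (fun _ y => edgeMonomial q (r + s + (r' + s')) y) := by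
  have hcone (m : Pairs n → ℕ) : condMoment q lam m ∈ subgroupCone (Lab n K) :=
    condMoment_mem_subgroupCone hq0 hq2 hlam m
  simp only [expec_edgeMonomial]
  calc (𝔼 z : Lab n K, condMoment q lam (r + r') z) * (𝔼 z : Lab n K, condMoment q lam s z) *
        𝔼 z : Lab n K, condMoment q lam s' z
      ≤ (𝔼 z : Lab n K, condMoment q lam (r + r') z * condMoment q lam s z) *
        𝔼 z : Lab n K, condMoment q lam s' z :=
        mul_le_mul_of_nonneg_right (expect_mul_expect_le_of_mem_subgroupCone (hcone _) (hcone _))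
          (Finset.expect_nonneg fun z _ => condMoment_nonneg hq0 hq2 hlam s' z)
    _ ≤ 𝔼 z : Lab n K,
          condMoment q lam (r + r') z * condMoment q lam s z * condMoment q lam s' z :=
        expect_mul_expect_le_of_mem_subgroupCone (mul_mem (hcone _) (hcone _)) (hcone _)
    _ ≤ 𝔼 z : Lab n K, lam ^ (sharedPairs (r + s) s (r' + s') s').card *
          condMoment q lam (r + s + (r' + s')) z :=
        Finset.expect_le_expect fun z _ => condMoment_mul_mul_le hq0 hq2 hql hlam h h' z
    _ = _ := (Finset.mul_expect _ _ _).symm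

end Moments

/-! ### Edge multiplicities of labeled graphs -/

section EdgeMult

variable {n : ℕ} {V : Type*}

lemma injOn_sym2Mk_of_lt {α : Type*} [Preorder α] :
    Set.InjOn (fun p : α × α => s(p.1, p.2)) {p | p.1 < p.2} := by
  rintro ⟨a, b⟩ hab ⟨c, d⟩ hcd h
  obtain ⟨rfl, rfl⟩ | ⟨rfl, rfl⟩ := Sym2.eq_iff.1 h
  · rfl
  · exact absurd hab (lt_asymm hcd)

lemma existsUnique_pair {i j : Fin n} (hij : i ≠ j) :
    ∃! p : Pairs n, s(p.1.1, p.1.2) = s(i, j) := by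
  refine existsUnique_of_exists_of_unique ?_ fun p p' hp hp' =>
    Subtype.ext (injOn_sym2Mk_of_lt p.2 p'.2 (hp.trans hp'.symm))
  obtain h | h := lt_or_gt_of_ne hij
  exacts [⟨⟨(i, j), h⟩, rfl⟩, ⟨⟨(j, i), h⟩, Sym2.eq_swap⟩]

lemma Ymat_eq_of_sym2_eq (q : ℝ) (y : EdgeConf n) {p : Pairs n} {i j : Fin n}
    (h : s(p.1.1, p.1.2) = s(i, j)) : Ymat n q y i j = (if y p then 1 else 0) - q := by
  obtain ⟨⟨a, b⟩, hab : a < b⟩ := p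
  obtain ⟨rfl, rfl⟩ | ⟨rfl, rfl⟩ := Sym2.eq_iff.1 h
  · simp only [Ymat, hab.ne, dite_false, min_eq_left hab.le, max_eq_right hab.le]
  · simp only [Ymat, hab.ne', dite_false, min_eq_right hab.le, max_eq_left hab.le]

/-- The number of edges of `F` that the labeling `π` sends onto the pair `p`. -/
def edgeMult (π : V ↪ Fin n) (F : Finset (V × V)) (p : Pairs n) : ℕ :=
  (F.filter fun e => s(p.1.1, p.1.2) = s(π e.1, π e.2)).card

lemma edgeMult_pos_iff {π : V ↪ Fin n} {F : Finset (V × V)} {p : Pairs n} :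
    0 < edgeMult π F p ↔ ∃ e ∈ F, s(p.1.1, p.1.2) = s(π e.1, π e.2) := by
  simp only [edgeMult, Finset.card_pos, Finset.filter_nonempty_iff]

lemma edgeMult_filter_not_add_edgeMult_filter (π : V ↪ Fin n) (F : Finset (V × V))
    (P : V × V → Prop) [DecidablePred P] :
    edgeMult π (F.filter fun e => ¬ P e) + edgeMult π (F.filter P) = edgeMult π F := by
  funext p
  simp only [Pi.add_apply, edgeMult, Finset.filter_comm _ _ F]
  rw [add_comm, Finset.card_filter_add_card_filter_not]

lemma edgeMult_le_one [Preorder V] (π : V ↪ Fin n) {F : Finset (V × V)}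
    (hF : ∀ e ∈ F, e.1 < e.2) : edgeMult π F ≤ 1 := fun p =>
  Finset.card_le_one.2 fun e he e' he' => by
    rw [Finset.mem_filter] at he he'
    exact injOn_sym2Mk_of_lt (hF e he.1) (hF e' he'.1)
      (Sym2.map.injective π.injective (he.2.symm.trans he'.2))

lemma prod_Ymat_eq_edgeMonomial (q : ℝ) (π : V ↪ Fin n) {F : Finset (V × V)}
    (hF : ∀ e ∈ F, e.1 ≠ e.2) (y : EdgeConf n) :
    ∏ e ∈ F, Ymat n q y (π e.1) (π e.2) = edgeMonomial q (edgeMult π F) y := by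
  have hcard : ∀ e ∈ F,
      (Finset.univ.filter fun p : Pairs n => s(p.1.1, p.1.2) = s(π e.1, π e.2)).card = 1 :=
    fun e he => by
      simpa only [Finset.card_eq_one, Finset.singleton_iff_unique_mem, Finset.mem_filter,
        Finset.mem_univ, true_and] using existsUnique_pair (π.injective.ne (hF e he))
  calc ∏ e ∈ F, Ymat n q y (π e.1) (π e.2)
      = ∏ e ∈ F, ∏ _p ∈ Finset.univ.filter fun p : Pairs n =>
          s(p.1.1, p.1.2) = s(π e.1, π e.2), Ymat n q y (π e.1) (π e.2) :=
        Finset.prod_congr rfl fun e he => by rw [Finset.prod_const, hcard e he, pow_one]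
    _ = ∏ p : Pairs n, ∏ e ∈ F.filter fun e => s(p.1.1, p.1.2) = s(π e.1, π e.2),
          Ymat n q y (π e.1) (π e.2) :=
        Finset.prod_comm' fun e p => by simp
    _ = edgeMonomial q (edgeMult π F) y :=
        Finset.prod_congr rfl fun p _ => Finset.prod_eq_pow_card fun e he =>
          Ymat_eq_of_sym2_eq q y (Finset.mem_filter.1 he).2

end EdgeMult

/-! ### Components of a template -/

section Components

variable {n : ℕ} {T : Template}

lemma reachable_compRep (w : Fin T.v) : T.graph.Reachable w (compRep T w) :=
  (Finset.mem_filter.1 (Finset.min'_mem _ _)).2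

lemma compRep_eq_of_reachable {w w' : Fin T.v} (h : T.graph.Reachable w w') :
    compRep T w = compRep T w' := by
  have hiff (u : Fin T.v) : T.graph.Reachable w u ↔ T.graph.Reachable w' u :=
    ⟨h.symm.trans, h.trans⟩
  simp only [compRep, hiff]

lemma compRep_mem_edgeCompReps {e : Fin T.v × Fin T.v} (he : e ∈ T.E) :
    compRep T e.1 ∈ edgeCompReps T :=
  Finset.mem_filter.2 ⟨Finset.mem_univ _, (compRep_eq_of_reachable (reachable_compRep e.1)).symm,
    e, he, reachable_compRep e.1⟩

/-- The edges lying in the components whose representatives are in `S`. -/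
def componentEdges (T : Template) (S : Finset (Fin T.v)) : Finset (Fin T.v × Fin T.v) :=
  T.E.filter fun e => compRep T e.1 ∈ S

lemma componentEdges_subset (S : Finset (Fin T.v)) : componentEdges T S ⊆ T.E :=
  Finset.filter_subset _ _

lemma componentEdges_sdiff (S : Finset (Fin T.v)) :
    componentEdges T (edgeCompReps T \ S) = T.E.filter fun e => compRep T e.1 ∉ S :=
  Finset.filter_congr fun e he => by
    simp only [Finset.mem_sdiff, compRep_mem_edgeCompReps he, true_and]

lemma filter_compRep_componentEdges {S : Finset (Fin T.v)} {w : Fin T.v}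
    (hw : w ∈ S) (hrep : compRep T w = w) :
    (componentEdges T S).filter (fun e => compRep T e.1 = w) = compEdges T w := by
  ext e
  simp only [componentEdges, compEdges, Finset.mem_filter]
  constructor
  · rintro ⟨⟨he, _⟩, hew⟩
    exact ⟨he, hew ▸ reachable_compRep e.1⟩
  · rintro ⟨he, hr⟩
    have hew : compRep T e.1 = w := (compRep_eq_of_reachable hr).trans hrep
    exact ⟨⟨he, hew ▸ hw⟩, hew⟩

lemma exists_incident_componentEdge {S : Finset (Fin T.v)} (hS : S ⊆ edgeCompReps T)
    {w : Fin T.v} (hw : compRep T w ∈ S) :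
    ∃ e ∈ componentEdges T S, w ∈ s(e.1, e.2) := by
  obtain ⟨e, he, hr⟩ := (Finset.mem_filter.1 (hS hw)).2.2
  obtain rfl | hne := eq_or_ne w e.1
  · exact ⟨e, Finset.mem_filter.2 ⟨he, hw⟩, Sym2.mem_mk_left _ _⟩
  obtain ⟨u, hwu⟩ : ∃ u, T.graph.Adj w u := by
    obtain ⟨walk⟩ := (reachable_compRep w).trans hr.symm
    exact ⟨_, walk.adj_snd (SimpleGraph.Walk.not_nil_of_ne hne)⟩
  obtain h | h := ((SimpleGraph.fromRel_adj _ _ _).1 hwu).2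
  · exact ⟨(w, u), Finset.mem_filter.2 ⟨h, hw⟩, Sym2.mem_mk_left _ _⟩
  · exact ⟨(u, w), Finset.mem_filter.2 ⟨h, compRep_eq_of_reachable hwu.reachable ▸ hw⟩,
      Sym2.mem_mk_right _ _⟩

lemma PG_eq_edgeMonomial (q : ℝ) (π : Fin T.v ↪ Fin n) (y : EdgeConf n) :
    PG n q T π y = edgeMonomial q (edgeMult π T.E) y :=
  prod_Ymat_eq_edgeMonomial q π (fun e he => (T.hE e he).ne) y

lemma prod_Pcomp_eq_edgeMonomial (q : ℝ) (π : Fin T.v ↪ Fin n) {S : Finset (Fin T.v)}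
    (hS : S ⊆ edgeCompReps T) (y : EdgeConf n) :
    ∏ w ∈ S, Pcomp n q T π w y = edgeMonomial q (edgeMult π (componentEdges T S)) y := by
  rw [← prod_Ymat_eq_edgeMonomial q π (fun e he => (T.hE e (componentEdges_subset S he)).ne),
    ← Finset.prod_fiberwise_of_maps_to (s := componentEdges T S) (t := S)
      (g := fun e => compRep T e.1) fun e he => (Finset.mem_filter.1 he).2]
  refine Finset.prod_congr rfl fun w hw => ?_
  rw [filter_compRep_componentEdges hw (Finset.mem_filter.1 (hS hw)).2.1, Pcomp]

lemma edgeMult_componentEdges_sdiff_add (π : Fin T.v ↪ Fin n) (S : Finset (Fin T.v)) :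
    edgeMult π (componentEdges T (edgeCompReps T \ S)) + edgeMult π (componentEdges T S) =
      edgeMult π T.E := by
  rw [componentEdges_sdiff, componentEdges]
  exact edgeMult_filter_not_add_edgeMult_filter π T.E fun e => compRep T e.1 ∈ S

end Components

/-! ### Perfectly matched nodes -/

section Matching

variable {n : ℕ} {T1 T2 : Template} {M : Finset (Fin T1.v × Fin T2.v)}
  {π1 : Fin T1.v ↪ Fin n} {π2 : Fin T2.v ↪ Fin n}
  {S1 : Finset (Fin T1.v)} {S2 : Finset (Fin T2.v)}

lemma exists_edge_of_mem_MPM_left {p : Fin T1.v × Fin T2.v} (hp : p ∈ MPM T1 T2 M)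
    (hπ : ∀ a b, (a, b) ∈ M → π1 a = π2 b)
    {e : Fin T1.v × Fin T1.v} (he : e ∈ T1.E) (hpe : p.1 ∈ s(e.1, e.2)) :
    ∃ e' ∈ T2.E, s(π1 e.1, π1 e.2) = s(π2 e'.1, π2 e'.2) := by
  have hmatched : EdgeMatched1 T1 T2 M e := by
    by_contra hunmatched
    exact (Finset.mem_filter.1 hp).2
      (Or.inl ⟨e, he, (Sym2.mem_iff.1 hpe).imp Eq.symm Eq.symm, hunmatched⟩)
  obtain ⟨e', he', h⟩ := hmatched
  exact ⟨e', he', Sym2.eq_iff.2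
    (h.imp (And.imp (hπ _ _) (hπ _ _)) (And.imp (hπ _ _) (hπ _ _)))⟩

lemma exists_edge_of_mem_MPM_right {p : Fin T1.v × Fin T2.v} (hp : p ∈ MPM T1 T2 M)
    (hπ : ∀ a b, (a, b) ∈ M → π1 a = π2 b)
    {e' : Fin T2.v × Fin T2.v} (he' : e' ∈ T2.E) (hpe' : p.2 ∈ s(e'.1, e'.2)) :
    ∃ e ∈ T1.E, s(π1 e.1, π1 e.2) = s(π2 e'.1, π2 e'.2) := by
  have hmatched : EdgeMatched2 T1 T2 M e' := by
    by_contra hunmatched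
    exact (Finset.mem_filter.1 hp).2
      (Or.inr ⟨e', he', (Sym2.mem_iff.1 hpe').imp Eq.symm Eq.symm, hunmatched⟩)
  obtain ⟨e, he, h⟩ := hmatched
  exact ⟨e, he, Sym2.eq_iff.2
    (h.imp (And.imp (hπ _ _) (hπ _ _)) (And.imp (hπ _ _) (hπ _ _)))⟩

/-- The perfectly matched pairs with a node in a component selected by `S1` or `S2`. -/
def selectedMPM (T1 T2 : Template) (M : Finset (Fin T1.v × Fin T2.v))
    (S1 : Finset (Fin T1.v)) (S2 : Finset (Fin T2.v)) : Finset (Fin T1.v × Fin T2.v) :=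
  (MPM T1 T2 M).filter fun p => compRep T1 p.1 ∈ S1 ∨ compRep T2 p.2 ∈ S2

lemma apply_fst_eq_apply_snd_of_mem_selectedMPM (hπ : ∀ a b, (a, b) ∈ M → π1 a = π2 b)
    {p : Fin T1.v × Fin T2.v} (hp : p ∈ selectedMPM T1 T2 M S1 S2) : π1 p.1 = π2 p.2 :=
  hπ _ _ (Finset.mem_filter.1 (Finset.mem_filter.1 hp).1).1

lemma mem_sym2_iff_of_sym2_eq {p : Fin T1.v × Fin T2.v} (hp : π1 p.1 = π2 p.2)
    {e : Fin T1.v × Fin T1.v} {e' : Fin T2.v × Fin T2.v}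
    (h : s(π1 e.1, π1 e.2) = s(π2 e'.1, π2 e'.2)) :
    p.1 ∈ s(e.1, e.2) ↔ p.2 ∈ s(e'.1, e'.2) :=
  calc p.1 ∈ s(e.1, e.2) ↔ π1 p.1 ∈ s(π1 e.1, π1 e.2) := by simp
    _ ↔ π2 p.2 ∈ s(π2 e'.1, π2 e'.2) := by rw [hp, h]
    _ ↔ p.2 ∈ s(e'.1, e'.2) := by simp

lemma exists_matched_edges_of_mem_selectedMPM (hπ : ∀ a b, (a, b) ∈ M → π1 a = π2 b)
    (hS1 : S1 ⊆ edgeCompReps T1) (hS2 : S2 ⊆ edgeCompReps T2)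
    {p : Fin T1.v × Fin T2.v} (hp : p ∈ selectedMPM T1 T2 M S1 S2) :
    ∃ e ∈ T1.E, ∃ e' ∈ T2.E, s(π1 e.1, π1 e.2) = s(π2 e'.1, π2 e'.2) ∧
      p.1 ∈ s(e.1, e.2) ∧ p.2 ∈ s(e'.1, e'.2) ∧
      (e ∈ componentEdges T1 S1 ∨ e' ∈ componentEdges T2 S2) := by
  have hpπ := apply_fst_eq_apply_snd_of_mem_selectedMPM hπ hp
  obtain ⟨hpM, hw | hw⟩ := Finset.mem_filter.1 hp
  · obtain ⟨e, heS, hpe⟩ := exists_incident_componentEdge hS1 hw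
    have he := componentEdges_subset S1 heS
    obtain ⟨e', he', h⟩ := exists_edge_of_mem_MPM_left hpM hπ he hpe
    exact ⟨e, he, e', he', h, hpe, (mem_sym2_iff_of_sym2_eq hpπ h).1 hpe, Or.inl heS⟩
  · obtain ⟨e', heS', hpe'⟩ := exists_incident_componentEdge hS2 hw
    have he' := componentEdges_subset S2 heS'
    obtain ⟨e, he, h⟩ := exists_edge_of_mem_MPM_right hpM hπ he' hpe'
    exact ⟨e, he, e', he', h, (mem_sym2_iff_of_sym2_eq hpπ h).2 hpe', hpe', Or.inr heS'⟩

lemma not_isIsolated_of_mem_sym2 {T : Template} {w : Fin T.v} {e : Fin T.v × Fin T.v}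
    (he : e ∈ T.E) (hw : w ∈ s(e.1, e.2)) : ¬ IsIsolated T w := fun hiso =>
  (Sym2.mem_iff.1 hw).elim (fun h => (hiso e he).1 h.symm) fun h => (hiso e he).2 h.symm

lemma filter_MPM_inter_Mminus_eq_selectedMPM (hπ : ∀ a b, (a, b) ∈ M → π1 a = π2 b)
    (hS1 : S1 ⊆ edgeCompReps T1) (hS2 : S2 ⊆ edgeCompReps T2) :
    ((MPM T1 T2 M ∩ Mminus T1 T2 M).filter fun p =>
      compRep T1 p.1 ∈ S1 ∨ compRep T2 p.2 ∈ S2) = selectedMPM T1 T2 M S1 S2 := by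
  refine Finset.Subset.antisymm
    (Finset.filter_subset_filter _ Finset.inter_subset_left) fun p hp => ?_
  obtain ⟨e, he, e', he', -, hpe, hpe', -⟩ :=
    exists_matched_edges_of_mem_selectedMPM hπ hS1 hS2 hp
  have h1 : ¬ IsIsolated T1 p.1 := not_isIsolated_of_mem_sym2 he hpe
  have h2 : ¬ IsIsolated T2 p.2 := not_isIsolated_of_mem_sym2 he' hpe'
  obtain ⟨hpM, hw⟩ := Finset.mem_filter.1 hp
  refine Finset.mem_filter.2 ⟨Finset.mem_inter.2 ⟨hpM, Finset.mem_filter.2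
    ⟨(Finset.mem_filter.1 hpM).1, ?_⟩⟩, hw⟩
  rintro (⟨rfl, h⟩ | ⟨rfl, h⟩) <;> exact h.elim h1 h2

lemma card_selectedMPM_le (hπ : ∀ a b, (a, b) ∈ M → π1 a = π2 b)
    (hS1 : S1 ⊆ edgeCompReps T1) (hS2 : S2 ⊆ edgeCompReps T2) :
    (selectedMPM T1 T2 M S1 S2).card ≤
      (sharedPairs (edgeMult π1 T1.E) (edgeMult π1 (componentEdges T1 S1))
        (edgeMult π2 T2.E) (edgeMult π2 (componentEdges T2 S2))).card * 2 := by
  set N := sharedPairs (edgeMult π1 T1.E) (edgeMult π1 (componentEdges T1 S1))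
    (edgeMult π2 T2.E) (edgeMult π2 (componentEdges T2 S2))
  have hinj : Set.InjOn (fun p : Fin T1.v × Fin T2.v => π1 p.1) (selectedMPM T1 T2 M S1 S2) := by
    intro p hp p' hp' h
    have h2 : π2 p.2 = π2 p'.2 := by
      rw [← apply_fst_eq_apply_snd_of_mem_selectedMPM hπ hp,
        ← apply_fst_eq_apply_snd_of_mem_selectedMPM hπ hp']
      exact h
    exact Prod.ext (π1.injective h) (π2.injective h2)
  have hmaps : Set.MapsTo (fun p : Fin T1.v × Fin T2.v => π1 p.1) (selectedMPM T1 T2 M S1 S2)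
      (N.biUnion fun p => {p.1.1, p.1.2}) := by
    intro p hp
    obtain ⟨e, he, e', he', h, hpe, -, hsel⟩ :=
      exists_matched_edges_of_mem_selectedMPM hπ hS1 hS2 hp
    obtain ⟨x, hx⟩ := (existsUnique_pair (π1.injective.ne (T1.hE e he).ne)).exists
    have hxN : x ∈ N := by
      refine Finset.mem_filter.2 ⟨Finset.mem_univ x, edgeMult_pos_iff.2 ⟨e, he, hx⟩,
        edgeMult_pos_iff.2 ⟨e', he', hx.trans h⟩, hsel.imp ?_ ?_⟩
      exacts [fun heS => edgeMult_pos_iff.2 ⟨e, heS, hx⟩,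
        fun heS' => edgeMult_pos_iff.2 ⟨e', heS', hx.trans h⟩]
    have hpx : π1 p.1 ∈ s(x.1.1, x.1.2) := hx ▸ Sym2.mem_map.2 ⟨p.1, hpe, rfl⟩
    exact Finset.mem_biUnion.2 ⟨x, hxN, by simpa using hpx⟩
  exact (Finset.card_le_card_of_injOn _ hmaps hinj).trans
    (Finset.card_biUnion_le_card_mul _ _ 2 fun p _ => Finset.card_le_two)

end Matching

theorem statement12_general (n K : ℕ) (q lam : ℝ) (hK : 0 < K)
    (hq0 : 0 ≤ q) (hq2 : q ≤ 1 / 2) (hql : q + 2 * lam ≤ 1) (hlam : 0 ≤ lam)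
    (T1 T2 : Template) (M : Finset (Fin T1.v × Fin T2.v))
    (π1 : Fin T1.v ↪ Fin n) (π2 : Fin T2.v ↪ Fin n) (hπ : ∀ a b, (a, b) ∈ M → π1 a = π2 b)
    (S1 : Finset (Fin T1.v)) (hS1 : S1 ⊆ edgeCompReps T1)
    (S2 : Finset (Fin T2.v)) (hS2 : S2 ⊆ edgeCompReps T2) :
    0 ≤ expec n K q lam (fun _ y =>
          (∏ w ∈ edgeCompReps T1 \ S1, Pcomp n q T1 π1 w y) *
          ∏ w ∈ edgeCompReps T2 \ S2, Pcomp n q T2 π2 w y) *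
        expec n K q lam (fun _ y => ∏ w ∈ S1, Pcomp n q T1 π1 w y) *
        expec n K q lam (fun _ y => ∏ w ∈ S2, Pcomp n q T2 π2 w y) ∧
    expec n K q lam (fun _ y =>
          (∏ w ∈ edgeCompReps T1 \ S1, Pcomp n q T1 π1 w y) *
          ∏ w ∈ edgeCompReps T2 \ S2, Pcomp n q T2 π2 w y) *
        expec n K q lam (fun _ y => ∏ w ∈ S1, Pcomp n q T1 π1 w y) *
        expec n K q lam (fun _ y => ∏ w ∈ S2, Pcomp n q T2 π2 w y) ≤
      lam ^ (((selectedMPM T1 T2 M S1 S2).card : ℝ) / 2) *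
        expec n K q lam (fun _ y => PG n q T1 π1 y * PG n q T2 π2 y) := by
  have : NeZero K := ⟨hK.ne'⟩
  have hnonneg (m : Pairs n → ℕ) : 0 ≤ expec n K q lam fun _ y => edgeMonomial q m y :=
    expec_edgeMonomial_nonneg hq0 hq2 hlam m
  have hsplit1 := edgeMult_componentEdges_sdiff_add π1 S1
  have hsplit2 := edgeMult_componentEdges_sdiff_add π2 S2
  have hbound := expec_edgeMonomial_mul_mul_le (K := K) hq0 hq2 hql hlam
    (hsplit1.trans_le (edgeMult_le_one π1 T1.hE)) (hsplit2.trans_le (edgeMult_le_one π2 T2.hE))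
  rw [hsplit1, hsplit2] at hbound
  simp only [PG_eq_edgeMonomial, prod_Pcomp_eq_edgeMonomial q _ hS1,
    prod_Pcomp_eq_edgeMonomial q _ hS2, prod_Pcomp_eq_edgeMonomial q _ Finset.sdiff_subset,
    ← edgeMonomial_add]
  refine ⟨mul_nonneg (mul_nonneg (hnonneg _) (hnonneg _)) (hnonneg _),
    hbound.trans (mul_le_mul_of_nonneg_right ?_ (hnonneg _))⟩
  rw [← Real.rpow_natCast]
  refine Real.rpow_le_rpow_of_exponent_ge' hlam (by linarith) (by positivity) ?_
  rw [div_le_iff₀ two_pos]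
  exact_mod_cast card_selectedMPM_le hπ hS1 hS2

theorem statement12 (n K : ℕ) (q lam : ℝ) (hn : 2 ≤ n) (hK : 2 ≤ K) (hKn : K ≤ n)
    (hq0 : 0 ≤ q) (hq2 : q ≤ 1 / 2) (hql : q + 2 * lam ≤ 1) (hlam : 0 < lam)
    (T1 T2 : Template)
    (M : Finset (Fin T1.v × Fin T2.v)) (hM : IsMatching T1 T2 M)
    (π1 : Fin T1.v ↪ Fin n) (π2 : Fin T2.v ↪ Fin n)
    (hπ : (π1, π2) ∈ PiM n hn T1 T2 M)
    (S1 : Finset (Fin T1.v)) (hS1 : S1 ⊆ edgeCompReps T1)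
    (S2 : Finset (Fin T2.v)) (hS2 : S2 ⊆ edgeCompReps T2) :
    0 ≤ expec n K q lam (fun _ y =>
          (∏ w ∈ edgeCompReps T1 \ S1, Pcomp n q T1 π1 w y) *
          ∏ w ∈ edgeCompReps T2 \ S2, Pcomp n q T2 π2 w y) *
        expec n K q lam (fun _ y => ∏ w ∈ S1, Pcomp n q T1 π1 w y) *
        expec n K q lam (fun _ y => ∏ w ∈ S2, Pcomp n q T2 π2 w y) ∧
    expec n K q lam (fun _ y =>
          (∏ w ∈ edgeCompReps T1 \ S1, Pcomp n q T1 π1 w y) *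
          ∏ w ∈ edgeCompReps T2 \ S2, Pcomp n q T2 π2 w y) *
        expec n K q lam (fun _ y => ∏ w ∈ S1, Pcomp n q T1 π1 w y) *
        expec n K q lam (fun _ y => ∏ w ∈ S2, Pcomp n q T2 π2 w y) ≤
      lam ^ (((((MPM T1 T2 M ∩ Mminus T1 T2 M).filter fun p =>
            compRep T1 p.1 ∈ S1 ∨ compRep T2 p.2 ∈ S2).card : ℕ) : ℝ) / 2) *
        expec n K q lam (fun _ y => PG n q T1 π1 y * PG n q T2 π2 y) := by
  rw [filter_MPM_inter_Mminus_eq_selectedMPM (fun a b => (hπ.2.2 a b).2) hS1 hS2]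
  exact statement12_general n K q lam (by omega) hq0 hq2 hql hlam.le T1 T2 M π1 π2
    (fun a b => (hπ.2.2 a b).2) S1 hS1 S2 hS2

end SBM
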